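/- Let U be a nonempty finite set of users and R = {r₁, …, r_k} a finite set of resources, let ω be a weighted user authorization function, and let C = B ∪ S, where B is a set of unordered pairs {r_i, r_j} of distinct resources carrying BoD_E constraints with weights w_c(A) = 0 if A(r_i) ∩ A(r_j) ≠ ∅ and ℓ_c > 0 otherwise, and S is a set of unordered pairs {r_i, r_j} carrying SoD_U constraints with weights w_c(A) = f_c(|A(r_i) ∩ A(r_j)|), f_c : ℤ → ℕ monotonically increasing with f_c(z) = 0 iff z ≤ 0. For each i let Γ(r_i) = {r_j : {r_i, r_j} ∈ B}, and define step sets S^i = {s^i} if Γ(r_i) = ∅ and S^i = {s^i_j : r_j ∈ Γ(r_i)} otherwise, with S' = S¹ ∪ ⋯ ∪ S^k. For a plan π : S' → U, let π(S^i) = {π(s) : s ∈ S^i}, for T ⊆ S' let R_T = {r_i : T ∩ S^i ≠ ∅}, and define the plan weight W(π) = Σ_{u ∈ U} ω(u, R_{π^{-1}(u)}) + Σ over {r_i,r_j} ∈ B of (0 if π(s^i_j) = π(s^j_i), else ℓ_c) + Σ over {r_i,r_j} ∈ S of f_c(|π(S^i) ∩ π(S^j)|). Then the minimum of w(A) = Ω(A)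 + w_C(A) over all complete authorization relations A ⊆ U × R equals the minimum of W(π) over all plans π : S' → U. -/

import Mathlib

open Finset

namespace APEP

variable {U : Type*} [Fintype U] [DecidableEq U]

/-- The set of users authorized for resource `r` by `A`. -/
def ares {R : Type*} [Fintype R] [DecidableEq R] [DecidableEq U]
    (A : Finset (U × R)) (r : R) : Finset U := univ.filter (fun u => (u, r) ∈ A)

/-- The set of resources for which user `u` is authorized by `A`. -/
def ausr {R : Type*} [Fintype R] [DecidableEq R] [DecidableEq U]
    (A : Finset (U × R)) (u : U) : Finset R := univ.filter (fun r => (u, r) ∈ A)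

/-- An authorization relation is complete if every resource has an authorized user. -/
def Complete {R : Type*} [Fintype R] [DecidableEq R] [DecidableEq U]
    (A : Finset (U × R)) : Prop := ∀ r : R, (ares A r).Nonempty

/-- `f : ℤ → ℕ` is monotonically increasing with `f z = 0` iff `z ≤ 0`. -/
def MonoIncZero (f : ℤ → ℕ) : Prop := Monotone f ∧ ∀ z : ℤ, f z = 0 ↔ z ≤ 0

/-- `Γ(r_i)`: the resources paired with `r_i` by some BoD_E constraint.  Unordered
pairs of distinct resources are represented by ordered pairs `(i, j)` with `i < j`. -/
def gam {k : ℕ} (Bc : Finset (Fin k × Fin k)) (i : Fin k) : Finset (Fin k) :=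
  univ.filter (fun j => (i, j) ∈ Bc ∨ (j, i) ∈ Bc)

/-- The set of workflow steps `S^i` associated with resource `r_i`:
`{s^i}` if `Γ(r_i) = ∅`, and `{s^i_j : r_j ∈ Γ(r_i)}` otherwise.  Step `s^i` is
encoded as `(i, none)` and step `s^i_j` as `(i, some j)`. -/
def stp {k : ℕ} (Bc : Finset (Fin k × Fin k)) (i : Fin k) :
    Finset (Fin k × Option (Fin k)) :=
  if gam Bc i = ∅ then {(i, none)} else (gam Bc i).image (fun j => (i, some j))

theorem aux_mem_ares {R : Type*} [Fintype R] [DecidableEq R]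
    (A : Finset (U × R)) (r : R) (u : U) : u ∈ ares A r ↔ (u, r) ∈ A := by
  simp [ares]

theorem aux_mem_ausr {R : Type*} [Fintype R] [DecidableEq R]
    (A : Finset (U × R)) (r : R) (u : U) : r ∈ ausr A u ↔ (u, r) ∈ A := by
  simp [ausr]

theorem aux_stp_fst {k : ℕ} (Bc : Finset (Fin k × Fin k)) (i : Fin k)
    (s : Fin k × Option (Fin k)) (hs : s ∈ stp Bc i) : s.1 = i := by
  unfold stp at hs
  split_ifs at hs
  · simp at hs; simp [hs]
  · simp at hs; obtain ⟨j, _, rfl⟩ := hs; rfl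

theorem aux_stp_nonempty {k : ℕ} (Bc : Finset (Fin k × Fin k)) (i : Fin k) :
    (stp Bc i).Nonempty := by
  unfold stp
  split_ifs with h
  · simp
  · exact (Finset.nonempty_iff_ne_empty.2 h).image _

theorem aux_stp_mem {k : ℕ} (Bc : Finset (Fin k × Fin k)) (i j : Fin k)
    (h : (i, j) ∈ Bc ∨ (j, i) ∈ Bc) : (i, some j) ∈ stp Bc i := by
  have hj : j ∈ gam Bc i := by simp [gam, h]
  unfold stp
  rw [if_neg (Finset.ne_empty_of_mem hj)]
  exact Finset.mem_image_of_mem _ hj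

theorem aux_sInf_le {S T : Set ℕ} (hT : T.Nonempty) (h : ∀ n ∈ T, ∃ m ∈ S, m ≤ n) :
    sInf S ≤ sInf T := by
  obtain ⟨m, hm, hle⟩ := h _ (Nat.sInf_mem hT)
  exact (Nat.sInf_le hm).trans hle

theorem bodE_sodU_valuedWSP_reduction [Nonempty U] (k : ℕ)
    -- BoD_E constraints: unordered pairs `{r_i, r_j}` of distinct resources,
    -- represented by pairs `(i, j)` with `i < j`, with penalties `ℓB`
    (Bc : Finset (Fin k × Fin k)) (hB : ∀ p ∈ Bc, p.1 < p.2)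
    (ℓB : Fin k × Fin k → ℕ) (hℓB : ∀ p ∈ Bc, 0 < ℓB p)
    -- SoD_U constraints: unordered pairs of distinct resources with weight functions `fS`
    (Sc : Finset (Fin k × Fin k)) (hS : ∀ p ∈ Sc, p.1 < p.2)
    (fS : Fin k × Fin k → ℤ → ℕ) (hfS : ∀ p ∈ Sc, MonoIncZero (fS p))
    -- the weighted user authorization function
    (ω : U → Finset (Fin k) → ℕ)
    (hω : ∀ (u : U) (T' T : Finset (Fin k)), T' ⊆ T → ω u T' ≤ ω u T)
    -- the total weight `w(A) = Ω(A) + w_C(A)` of an authorization relation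
    (wt : Finset (U × Fin k) → ℕ)
    (hwt : ∀ A, wt A = (∑ u, ω u (ausr A u)) +
      ((∑ p ∈ Bc, if ((ares A p.1) ∩ (ares A p.2)).Nonempty then 0 else ℓB p) +
        ∑ p ∈ Sc, fS p (((ares A p.1) ∩ (ares A p.2)).card)))
    -- the weight `W(π)` of a plan `π : S' → U`
    (W : (Fin k × Option (Fin k) → U) → ℕ)
    (hW : ∀ π, W π =
      (∑ u, ω u (univ.filter (fun i => ∃ s ∈ stp Bc i, π s = u))) +
        ((∑ p ∈ Bc, if π (p.1, some p.2) = π (p.2, some p.1) then 0 else ℓB p) +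
          ∑ p ∈ Sc, fS p ((((stp Bc p.1).image π) ∩ ((stp Bc p.2).image π)).card))) :
    sInf {n : ℕ | ∃ A : Finset (U × Fin k), Complete A ∧ wt A = n} =
      sInf {n : ℕ | ∃ π : Fin k × Option (Fin k) → U, W π = n} := by
  classical
  obtain ⟨u0⟩ := ‹Nonempty U›
  apply le_antisymm
  · refine aux_sInf_le ⟨_, fun _ => u0, rfl⟩ ?_
    rintro n ⟨π, rfl⟩
    let A : Finset (U × Fin k) := univ.filter (fun q => ∃ s ∈ stp Bc q.2, π s = q.1)
    have hA : ∀ i, ares A i = (stp Bc i).image π := by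
      intro i; ext u; rw [aux_mem_ares]; simp [A]
    have hA2 : ∀ u, ausr A u = univ.filter (fun i => ∃ s ∈ stp Bc i, π s = u) := by
      intro u; ext i; rw [aux_mem_ausr]; simp [A]
    refine ⟨_, ⟨A, ?_, rfl⟩, ?_⟩
    · intro i
      rw [hA]
      exact (aux_stp_nonempty Bc i).image _
    · rw [hwt, hW]
      refine add_le_add (le_of_eq ?_) (add_le_add (Finset.sum_le_sum ?_) (le_of_eq ?_))
      · simp only [hA2]
      · intro p hp
        by_cases h : π (p.1, some p.2) = π (p.2, some p.1)
        · rw [if_pos]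
          · exact Nat.zero_le _
          · refine ⟨π (p.1, some p.2), ?_⟩
            rw [Finset.mem_inter, hA, hA]
            refine ⟨Finset.mem_image_of_mem _ (aux_stp_mem Bc _ _ (Or.inl hp)), ?_⟩
            rw [h]
            exact Finset.mem_image_of_mem _ (aux_stp_mem Bc _ _ (Or.inr hp))
        · rw [if_neg h]
          split_ifs
          · exact Nat.zero_le _
          · exact le_rfl
      · simp only [hA]
  · have hne : ∃ A : Finset (U × Fin k), Complete A := by
      refine ⟨univ, fun i => ⟨u0, ?_⟩⟩
      rw [aux_mem_ares]; exact Finset.mem_univ _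
    obtain ⟨A0, hA0⟩ := hne
    refine aux_sInf_le ⟨_, A0, hA0, rfl⟩ ?_
    rintro n ⟨A, hA, rfl⟩
    have hg : ∃ g : Finset U → U, ∀ s : Finset U, s.Nonempty → g s ∈ s :=
      ⟨fun s => if h : s.Nonempty then h.choose else u0, fun s h => by
        simp only [dif_pos h]; exact h.choose_spec⟩
    obtain ⟨g, hg⟩ := hg
    let π : Fin k × Option (Fin k) → U := fun s =>
      match s.2 with
      | none => g (ares A s.1)
      | some j => if (ares A s.1 ∩ ares A j).Nonempty then g (ares A s.1 ∩ ares A j)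
          else g (ares A s.1)
    have hπ : ∀ s, π s ∈ ares A s.1 := by
      rintro ⟨i, _ | j⟩
      · exact hg _ (hA i)
      · simp only [π]
        split_ifs with h
        · exact (Finset.mem_inter.1 (hg _ h)).1
        · exact hg _ (hA i)
    have himg : ∀ i, (stp Bc i).image π ⊆ ares A i := by
      intro i u hu
      obtain ⟨s, hs, rfl⟩ := Finset.mem_image.1 hu
      have := hπ s
      rwa [aux_stp_fst Bc i s hs] at this
    refine ⟨_, ⟨π, rfl⟩, ?_⟩
    rw [hwt, hW]
    refine add_le_add (Finset.sum_le_sum ?_) (add_le_add (Finset.sum_le_sum ?_)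
      (Finset.sum_le_sum ?_))
    · intro u _
      apply hω
      intro i hi
      obtain ⟨s, hs, hsu⟩ := (Finset.mem_filter.1 hi).2
      rw [aux_mem_ausr, ← aux_mem_ares]
      exact himg i (Finset.mem_image.2 ⟨s, hs, hsu⟩)
    · intro p _
      by_cases h : (ares A p.1 ∩ ares A p.2).Nonempty
      · have h' : (ares A p.2 ∩ ares A p.1).Nonempty := by rwa [Finset.inter_comm]
        have : π (p.1, some p.2) = π (p.2, some p.1) := by
          simp only [π]
          rw [if_pos h, if_pos h', Finset.inter_comm]
        rw [if_pos this]
        exact Nat.zero_le _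
      · rw [if_neg h]
        split_ifs
        · exact Nat.zero_le _
        · exact le_rfl
    · intro p hp
      apply (hfS p hp).1
      exact_mod_cast Finset.card_le_card (Finset.inter_subset_inter (himg _) (himg _))


end APEP
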